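/- Let K be a field of characteristic zero and let P = Σ_{j=1}^{k} a_j X^{α_j} (1+X)^{β_j} be a polynomial in K[X] with nonnegative integer exponents α_1 ≤ ... ≤ α_k. If P is not identically zero, then the valuation of P (the largest v such that X^v divides P) is at most max_{1≤j≤k} (α_j + (k+1-j choose 2)). -/

import Mathlib

/-!
Let `D = X (1 + X) d/dX`, a derivation which preserves divisibility by powers of `X` and of
`1 + X` and raises degrees by at most one. After discarding terms, `P` is a combination with nonzero
coefficients of `n` linearly independent functions `f_j = X ^ α_j (1 + X) ^ β_j`. Their Wronskian
`W` with respect to `D` is nonzero and has degree at most `∑ (α_j + β_j) + (n choose 2)`.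
Replacing one column `f_j` by `P` multiplies `W` by a nonzero constant, so `W` is divisible by
`X ^ (val P + ∑_{i ≠ j} α_i)` and by `(1 + X) ^ (∑ β_i)`; comparing degrees bounds `val P` by
`α_j + (n choose 2)`. Taking for `j` the least of the `n` indices makes `n` at most the number of
indices from `j` on.

For the nonvanishing of `W`: if `W = 0`, the span of the `f_j` consists of solutions of a linear
differential equation `∑_{i < n} c_i D ^ i g = 0`. Since `D` multiplies the lowest term `X ^ v` of
`g` by `v`, the orders at `0` of the solutions are roots of an indicial polynomial of degree less
than `n`, and a space of polynomials has dimension at most the number of orders it realizes.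
-/

open Polynomial

section WronskianMatrix

variable {R A : Type*} [CommRing R] [CommRing A] [Algebra R A] {n : ℕ}

/-- The Wronskian matrix of `f` with respect to the derivation `D`, whose `i`-th row consists of the
`i`-th derivatives; its determinant is the Wronskian of `f`. -/
def wronskianMatrix (D : Derivation R A A) (f : Fin n → A) : Matrix (Fin n) (Fin n) A :=
  Matrix.of fun i j => ((D : A →ₗ[R] A) ^ (i : ℕ)) (f j)

theorem pow_dvd_derivation_apply {D : Derivation R A A} {q p : A} (hq : q ∣ D q) {e : ℕ}
    (hp : q ^ e ∣ p) : q ^ e ∣ D p := by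
  obtain ⟨r, rfl⟩ := hp
  have hqe : q ^ e ∣ D (q ^ e) := by
    rcases e with _ | e
    · simp
    · rw [D.leibniz_pow, Nat.add_sub_cancel, smul_eq_mul, pow_succ]
      exact dvd_smul_of_dvd _ (mul_dvd_mul_left _ hq)
  rw [D.leibniz, smul_eq_mul, smul_eq_mul]
  exact (dvd_mul_right _ _).add (hqe.mul_left r)

theorem pow_dvd_derivation_pow_apply {D : Derivation R A A} {q p : A} (hq : q ∣ D q) {e : ℕ}
    (hp : q ^ e ∣ p) (i : ℕ) : q ^ e ∣ ((D : A →ₗ[R] A) ^ i) p := by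
  induction i with
  | zero => simpa using hp
  | succ i ih =>
    rw [pow_succ', Module.End.mul_apply]
    exact pow_dvd_derivation_apply hq ih

theorem pow_sum_dvd_det_wronskianMatrix {D : Derivation R A A} {q : A} (hq : q ∣ D q)
    {f : Fin n → A} {e : Fin n → ℕ} (hf : ∀ j, q ^ e j ∣ f j) :
    q ^ ∑ j, e j ∣ (wronskianMatrix D f).det := by
  choose N hN using fun i j : Fin n => pow_dvd_derivation_pow_apply hq (hf j) i
  have hdet : (wronskianMatrix D f).det = (∏ j, q ^ e j) * (Matrix.of N).det := by
    rw [← Matrix.det_mul_row]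
    exact congrArg Matrix.det (Matrix.ext hN)
  rw [hdet, Finset.prod_pow_eq_pow_sum]
  exact dvd_mul_right _ _

theorem det_wronskianMatrix_update_sum (D : Derivation R A A) (f : Fin n → A) (a : Fin n → R)
    (j : Fin n) :
    (wronskianMatrix D (Function.update f j (∑ i, a i • f i))).det =
      a j • (wronskianMatrix D f).det := by
  have hcol : wronskianMatrix D (Function.update f j (∑ i, a i • f i)) =
      (wronskianMatrix D f).updateCol j
        fun k => ∑ i, algebraMap R A (a i) • wronskianMatrix D f k i := by
    ext k l
    rcases eq_or_ne l j with rfl | hl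
    · simp [wronskianMatrix, ← Algebra.smul_def]
    · simp [wronskianMatrix, hl]
  rw [hcol, Matrix.det_updateCol_sum, algebraMap_smul]

end WronskianMatrix

theorem natDegree_det_le_sum_add_sum {R ι : Type*} [CommRing R] [Fintype ι] [DecidableEq ι]
    {M : Matrix ι ι R[X]} {r c : ι → ℕ} (hM : ∀ i j, (M i j).natDegree ≤ r i + c j) :
    M.det.natDegree ≤ ∑ i, r i + ∑ j, c j := by
  rw [Matrix.det_apply]
  refine natDegree_sum_le_of_forall_le _ _ fun σ _ => ?_
  calc (Equiv.Perm.sign σ • ∏ j, M (σ j) j).natDegree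
      ≤ (∏ j, M (σ j) j).natDegree := natDegree_smul_le _ _
    _ ≤ ∑ j, (M (σ j) j).natDegree := natDegree_prod_le _ _
    _ ≤ ∑ j, (r (σ j) + c j) := Finset.sum_le_sum fun j _ => hM _ _
    _ = ∑ i, r i + ∑ j, c j := by rw [Finset.sum_add_distrib, Equiv.sum_comp σ r]

section LogDerivation

variable {R : Type*} [CommRing R]

variable (R) in
/-- The derivation `X (1 + X) d/dX`. It is logarithmic along `X (1 + X) = 0`, that is, it preserves
the ideals generated by powers of `X` and of `1 + X`. -/
noncomputable def logDerivation : Derivation R R[X] R[X] :=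
  (X * (1 + X) : R[X]) • derivative'

theorem logDerivation_apply (p : R[X]) : logDerivation R p = X * (1 + X) * derivative p := rfl

theorem X_dvd_logDerivation_X : (X : R[X]) ∣ logDerivation R X :=
  ⟨1 + X, by simp [logDerivation_apply]⟩

theorem one_add_X_dvd_logDerivation_one_add_X : (1 + X : R[X]) ∣ logDerivation R (1 + X) :=
  ⟨X, by simp [logDerivation_apply, mul_comm]⟩

theorem natDegree_logDerivation_le (p : R[X]) :
    (logDerivation R p).natDegree ≤ p.natDegree + 1 := by
  rw [logDerivation_apply]
  rcases Nat.eq_zero_or_pos p.natDegree with h0 | hpos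
  · rw [derivative_of_natDegree_zero h0]
    simp
  · have hquad : (X * (1 + X) : R[X]).natDegree ≤ 2 := by compute_degree
    have hderiv := natDegree_derivative_le p
    exact natDegree_mul_le.trans (by omega)

theorem natDegree_logDerivation_pow_le (p : R[X]) (i : ℕ) :
    (((logDerivation R : R[X] →ₗ[R] R[X]) ^ i) p).natDegree ≤ i + p.natDegree := by
  induction i with
  | zero => simp
  | succ i ih =>
    rw [pow_succ', Module.End.mul_apply]
    exact (natDegree_logDerivation_le _).trans (by omega)

theorem natDegree_det_wronskianMatrix_logDerivation_le {n : ℕ} (f : Fin n → R[X]) :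
    (wronskianMatrix (logDerivation R) f).det.natDegree ≤
      n.choose 2 + ∑ j, (f j).natDegree := by
  have hrows : ∑ i : Fin n, (i : ℕ) = n.choose 2 := by
    rw [Fin.sum_univ_eq_sum_range (fun i => i), Finset.sum_range_id, Nat.choose_two_right]
  rw [← hrows]
  exact natDegree_det_le_sum_add_sum fun i j => natDegree_logDerivation_pow_le (f j) i

theorem coeff_logDerivation_of_X_pow_dvd {p : R[X]} {v : ℕ} (hp : X ^ v ∣ p) :
    (logDerivation R p).coeff v = v * p.coeff v := by
  obtain ⟨q, rfl⟩ := hp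
  have hD : logDerivation R (X ^ v * q) =
      X ^ v * (C (v : R) * (1 + X) * q + X * (1 + X) * derivative q) := by
    rcases v with _ | v
    · simp [logDerivation_apply]
    · rw [logDerivation_apply, derivative_mul, derivative_X_pow, Nat.add_sub_cancel]
      ring
  rw [hD]
  simp [coeff_X_pow_mul', mul_coeff_zero]

theorem coeff_logDerivation_pow_of_X_pow_dvd {p : R[X]} {v : ℕ} (hp : X ^ v ∣ p) (i : ℕ) :
    (((logDerivation R : R[X] →ₗ[R] R[X]) ^ i) p).coeff v = (v : R) ^ i * p.coeff v := by
  induction i with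
  | zero => simp
  | succ i ih =>
    have hpi := pow_dvd_derivation_pow_apply X_dvd_logDerivation_X hp i
    rw [pow_succ', Module.End.mul_apply, Derivation.coeFn_coe,
      coeff_logDerivation_of_X_pow_dvd hpi, ih, pow_succ', mul_assoc]

end LogDerivation

section IndicialPolynomial

variable {R : Type*} [CommRing R] {n : ℕ}

theorem X_pow_natTrailingDegree_dvd (p : R[X]) : X ^ p.natTrailingDegree ∣ p :=
  X_pow_dvd_iff.2 fun _ => coeff_eq_zero_of_lt_natTrailingDegree

theorem coeff_mul_of_X_pow_dvd (p : R[X]) {q : R[X]} {v : ℕ} (hq : X ^ v ∣ q) :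
    (p * q).coeff v = p.coeff 0 * q.coeff v := by
  obtain ⟨q, rfl⟩ := hq
  rw [mul_left_comm]
  simp [coeff_X_pow_mul', mul_coeff_zero]

theorem exists_eq_X_pow_smul_coeff_zero_ne_zero {ι : Type*} [Finite ι] {c : ι → R[X]}
    (hc : c ≠ 0) : ∃ (m : ℕ) (d : ι → R[X]), c = (X ^ m : R[X]) • d ∧ ∃ i, (d i).coeff 0 ≠ 0 := by
  obtain ⟨i, hi, hmin⟩ := Set.exists_min_image {i | c i ≠ 0} (fun i => (c i).natTrailingDegree)
    (Set.toFinite _) (Function.ne_iff.1 hc)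
  have hdvd (j : ι) : X ^ (c i).natTrailingDegree ∣ c j := by
    by_cases hj : c j = 0
    · simp [hj]
    · exact (pow_dvd_pow X (hmin j hj)).trans (X_pow_natTrailingDegree_dvd _)
  choose d hd using hdvd
  refine ⟨_, d, funext hd, i, fun h0 => trailingCoeff_eq_zero.not.2 hi ?_⟩
  rw [trailingCoeff, hd i, coeff_X_pow_mul', ← hd i]
  simpa using h0

/-- The indicial polynomial at the singular point `0` of the differential operator
`∑ i, c i * D ^ i`, where `D = logDerivation R`. -/
noncomputable def indicialPolynomial (c : Fin n → R[X]) : R[X] :=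
  ∑ i, C ((c i).coeff 0) * X ^ (i : ℕ)

theorem coeff_indicialPolynomial (c : Fin n → R[X]) (i : Fin n) :
    (indicialPolynomial c).coeff i = (c i).coeff 0 := by
  simp [indicialPolynomial, coeff_X_pow, Fin.val_inj]

theorem degree_indicialPolynomial_lt (c : Fin n → R[X]) : (indicialPolynomial c).degree < n :=
  degree_sum_fin_lt fun i => (c i).coeff 0

theorem isRoot_indicialPolynomial [NoZeroDivisors R] {c : Fin n → R[X]} {g : R[X]} (hg : g ≠ 0)
    (hode : ∑ i, c i * ((logDerivation R : R[X] →ₗ[R] R[X]) ^ (i : ℕ)) g = 0) :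
    (indicialPolynomial c).IsRoot (g.natTrailingDegree : R) := by
  set v := g.natTrailingDegree
  have hv : X ^ v ∣ g := X_pow_natTrailingDegree_dvd g
  have hlow : (indicialPolynomial c).eval (v : R) * g.coeff v = 0 := by
    calc (indicialPolynomial c).eval (v : R) * g.coeff v
        = (∑ i, c i * ((logDerivation R : R[X] →ₗ[R] R[X]) ^ (i : ℕ)) g).coeff v := by
          simp only [indicialPolynomial, eval_finsetSum, eval_mul, eval_C, eval_pow, eval_X,
            finsetSum_coeff, Finset.sum_mul]
          refine Finset.sum_congr rfl fun i _ => ?_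
          rw [coeff_mul_of_X_pow_dvd _ (pow_dvd_derivation_pow_apply X_dvd_logDerivation_X hv i),
            coeff_logDerivation_pow_of_X_pow_dvd hv, mul_assoc]
      _ = 0 := by rw [hode, coeff_zero]
  exact (mul_eq_zero.1 hlow).resolve_right (trailingCoeff_eq_zero.not.2 hg)

theorem finrank_le_card_of_natTrailingDegree_mem [Nontrivial R] {V : Submodule R R[X]}
    {T : Finset ℕ} (hT : ∀ g ∈ V, g ≠ 0 → g.natTrailingDegree ∈ T) :
    Module.finrank R V ≤ T.card := by
  let coeffs : V →ₗ[R] (T → R) := LinearMap.pi fun v => lcoeff R v ∘ₗ V.subtype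
  have hinj : Function.Injective coeffs := by
    refine (injective_iff_map_eq_zero coeffs).2 fun g hg => ?_
    by_contra hg0
    have hg0' : (g : R[X]) ≠ 0 := fun h => hg0 (Subtype.ext h)
    exact trailingCoeff_eq_zero.not.2 hg0' (congrFun hg ⟨_, hT g g.2 hg0'⟩)
  simpa using LinearMap.finrank_le_finrank_of_injective hinj

theorem finrank_lt_of_sum_mul_logDerivation_pow_eq_zero [IsDomain R] [CharZero R]
    {c : Fin n → R[X]} (hc : c ≠ 0) {V : Submodule R R[X]}
    (hV : ∀ g ∈ V, ∑ i, c i * ((logDerivation R : R[X] →ₗ[R] R[X]) ^ (i : ℕ)) g = 0) :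
    Module.finrank R V < n := by
  classical
  obtain ⟨m, d, rfl, i, hi⟩ := exists_eq_X_pow_smul_coeff_zero_ne_zero hc
  have hd : ∀ g ∈ V, ∑ i, d i * ((logDerivation R : R[X] →ₗ[R] R[X]) ^ (i : ℕ)) g = 0 := by
    intro g hg
    have hXd := hV g hg
    simp only [Pi.smul_apply, smul_eq_mul, mul_assoc, ← Finset.mul_sum] at hXd
    exact (mul_eq_zero.1 hXd).resolve_left (pow_ne_zero m X_ne_zero)
  have hp : indicialPolynomial d ≠ 0 := fun h => hi <| by
    rw [← coeff_indicialPolynomial, h, coeff_zero]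
  set p := indicialPolynomial d
  let T : Finset ℕ := p.roots.toFinset.preimage Nat.cast Nat.cast_injective.injOn
  have hT : ∀ g ∈ V, g ≠ 0 → g.natTrailingDegree ∈ T := fun g hg hg0 => by
    simpa [T, hp] using isRoot_indicialPolynomial hg0 (hd g hg)
  calc Module.finrank R V ≤ T.card := finrank_le_card_of_natTrailingDegree_mem hT
    _ ≤ p.roots.toFinset.card := by
      rw [Finset.card_preimage]
      exact Finset.card_filter_le _ _
    _ ≤ p.natDegree := p.roots.toFinset_card_le.trans p.card_roots'
    _ < n := (natDegree_lt_iff_degree_lt hp).2 (degree_indicialPolynomial_lt d)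

theorem det_wronskianMatrix_logDerivation_ne_zero [IsDomain R] [CharZero R] {f : Fin n → R[X]}
    (hf : LinearIndependent R f) : (wronskianMatrix (logDerivation R) f).det ≠ 0 := by
  intro hdet
  obtain ⟨c, hc, hcf⟩ := Matrix.exists_vecMul_eq_zero_iff.2 hdet
  let L : R[X] →ₗ[R] R[X] :=
    ∑ i, LinearMap.mulLeft R (c i) ∘ₗ (logDerivation R : R[X] →ₗ[R] R[X]) ^ (i : ℕ)
  have hL : Submodule.span R (Set.range f) ≤ LinearMap.ker L := by
    rw [Submodule.span_le]
    rintro _ ⟨j, rfl⟩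
    simpa [L, Matrix.vecMul, dotProduct, wronskianMatrix] using congrFun hcf j
  refine (finrank_span_eq_card hf).not_lt ?_
  rw [Fintype.card_fin]
  exact finrank_lt_of_sum_mul_logDerivation_pow_eq_zero hc fun g hg => by simpa [L] using hL hg

end IndicialPolynomial

theorem natDegree_X_pow_mul_one_add_X_pow {R : Type*} [CommRing R] [Nontrivial R] (s t : ℕ) :
    (X ^ s * (1 + X) ^ t : R[X]).natDegree = s + t := by
  have hmonic : (X + C 1 : R[X]).Monic := monic_X_add_C 1
  rw [add_comm (1 : R[X]), ← C_1, (monic_X_pow s).natDegree_mul (hmonic.pow t),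
    hmonic.natDegree_pow, natDegree_X_pow, natDegree_X_add_C, mul_one]

theorem le_add_choose_two_of_X_pow_dvd_sum_fin {R : Type*} [CommRing R] [IsDomain R] [CharZero R]
    {n : ℕ} {a : Fin n → R} {α β : Fin n → ℕ}
    (hli : LinearIndependent R fun j => (X ^ α j * (1 + X) ^ β j : R[X])) {v : ℕ}
    (hv : X ^ v ∣ ∑ j, a j • (X ^ α j * (1 + X) ^ β j : R[X])) {j : Fin n} (hj : a j ≠ 0) :
    v ≤ α j + n.choose 2 := by
  set f : Fin n → R[X] := fun j => X ^ α j * (1 + X) ^ β j with hf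
  set W := (wronskianMatrix (logDerivation R) f).det
  have hW : a j • W ≠ 0 := smul_ne_zero hj (det_wronskianMatrix_logDerivation_ne_zero hli)
  have hX : X ^ ∑ i, Function.update α j v i ∣ a j • W := by
    rw [← det_wronskianMatrix_update_sum]
    refine pow_sum_dvd_det_wronskianMatrix X_dvd_logDerivation_X fun i => ?_
    rcases eq_or_ne i j with rfl | hij
    · simpa using hv
    · simp [hij, hf]
  have hone_add_X : (1 + X) ^ ∑ i, β i ∣ a j • W :=
    dvd_smul_of_dvd _ (pow_sum_dvd_det_wronskianMatrix one_add_X_dvd_logDerivation_one_add_X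
      fun i => dvd_mul_left _ _)
  have hcop : IsCoprime (X : R[X]) (1 + X) := ⟨-1, 1, by ring⟩
  have hdeg := natDegree_le_of_dvd (hcop.pow.mul_dvd hX hone_add_X) hW
  have hWdeg : W.natDegree ≤ n.choose 2 + ∑ i, (f i).natDegree :=
    natDegree_det_wronskianMatrix_logDerivation_le f
  have hsmul := natDegree_smul_le (a j) W
  simp only [hf, natDegree_X_pow_mul_one_add_X_pow, Finset.sum_add_distrib] at hdeg hWdeg
  rw [Finset.sum_update_of_mem (Finset.mem_univ j)] at hdeg
  have hα := Finset.sum_eq_add_sum_sdiff_singleton_of_mem (Finset.mem_univ j) α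
  omega

theorem le_add_choose_two_of_X_pow_dvd_sum {R ι : Type*} [CommRing R] [IsDomain R] [CharZero R]
    {S : Finset ι} {a : ι → R} {α β : ι → ℕ}
    (hli : LinearIndepOn R (fun j => (X ^ α j * (1 + X) ^ β j : R[X])) (S : Set ι)) {v : ℕ}
    (hv : X ^ v ∣ ∑ j ∈ S, a j • (X ^ α j * (1 + X) ^ β j : R[X])) {j : ι} (hjS : j ∈ S)
    (hj : a j ≠ 0) : v ≤ α j + S.card.choose 2 := by
  let e : Fin S.card ≃ S := S.equivFin.symm
  rw [← Finset.sum_coe_sort, ← Equiv.sum_comp e] at hv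
  simpa using le_add_choose_two_of_X_pow_dvd_sum_fin (hli.comp e e.injective) hv
    (j := e.symm ⟨j, hjS⟩) (by simpa using hj)

theorem exists_linearIndepOn_support_linearCombination_eq {K V ι : Type*} [DivisionRing K]
    [AddCommGroup V] [Module K V] {v : ι → V} {x : V} (hx : x ∈ Submodule.span K (Set.range v)) :
    ∃ l : ι →₀ K, LinearIndepOn K v (l.support : Set ι) ∧ Finsupp.linearCombination K v l = x := by
  obtain ⟨κ, e, he, hspan, hli⟩ := exists_linearIndependent' K v
  rw [← hspan, Set.range_comp, Finsupp.mem_span_image_iff_linearCombination] at hx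
  obtain ⟨l, hl, rfl⟩ := hx
  exact ⟨l, ((linearIndepOn_range_iff he v).2 hli).mono hl, rfl⟩

theorem stmt0_general {K ι : Type*} [Field K] [CharZero K] [Fintype ι] [LinearOrder ι]
    [LocallyFiniteOrderTop ι] (a : ι → K) (α β : ι → ℕ) (P : K[X])
    (hPdef : P = ∑ j, C (a j) * X ^ (α j) * (1 + X) ^ (β j)) (hP : P ≠ 0) :
    ∃ j, P.rootMultiplicity 0 ≤ α j + (Finset.Ici j).card.choose 2 := by
  have hspan : P ∈ Submodule.span K (Set.range fun j => (X ^ α j * (1 + X) ^ β j : K[X])) := by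
    rw [hPdef, Submodule.mem_span_range_iff_exists_fun]
    exact ⟨a, by simp only [smul_eq_C_mul, mul_assoc]⟩
  obtain ⟨l, hli, hl⟩ := exists_linearIndepOn_support_linearCombination_eq hspan
  rw [Finsupp.linearCombination_apply, Finsupp.sum] at hl
  have hne : l.support.Nonempty := by
    rw [Finset.nonempty_iff_ne_empty]
    intro hempty
    exact hP (by rw [← hl, hempty, Finset.sum_empty])
  have hmem := l.support.min'_mem hne
  set j := l.support.min' hne
  have hcard : l.support.card ≤ (Finset.Ici j).card :=
    Finset.card_le_card fun i hi => Finset.mem_Ici.2 (l.support.min'_le i hi)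
  have hdvd : X ^ P.rootMultiplicity 0 ∣
      ∑ i ∈ l.support, l i • (X ^ α i * (1 + X) ^ β i : K[X]) := by
    simpa [hl] using pow_rootMultiplicity_dvd P 0
  have hle := le_add_choose_two_of_X_pow_dvd_sum hli hdvd hmem (Finsupp.mem_support_iff.1 hmem)
  exact ⟨j, hle.trans (Nat.add_le_add_left (Nat.choose_le_choose 2 hcard) _)⟩

theorem stmt0 {K : Type*} [Field K] [CharZero K] (k : ℕ)
    (a : Fin k → K) (α β : Fin k → ℕ) (hα : Monotone α)
    (P : K[X]) (hPdef : P = ∑ j, C (a j) * X ^ (α j) * (1 + X) ^ (β j))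
    (hP : P ≠ 0) :
    ∃ j : Fin k, P.rootMultiplicity 0 ≤ α j + (k - (j : ℕ)).choose 2 := by
  simpa only [Fin.card_Ici] using stmt0_general a α β P hPdef hP
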